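/- arXiv:1510.03141 — 3 statements merged into one kernel-verified Lean document; each statement's English description precedes it below -/
import Mathlib

section
/- Let d ∈ ℕ, p ∈ ℕ₀, C > 0, h ∈ [1, ∞], Q ∈ ℕ, and let a : [0,1]^d → ℝ be (p+1, C)-smooth with respect to the norm |·|_h. Then there exists a function g : [0,1]^d → ℝ which, on each cube of the equidistant partition of [0,1]^d into Q^d congruent subcubes of side length 1/Q, coincides with a polynomial of total degree at most p (namely, the degree-p Taylor polynomial of a around the midpoint of the cube), such that sup_{x ∈ [0,1]^d} |a(x) − g(x)| ≤ ( C / ( d^{1 − 1/h} (p+1)! ) ) · ( d / (2Q) )^{p+1}. -/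
open scoped ENNReal

/-- The `|·|_h` norm on `ℝ^d`, `h ∈ [1,∞]`: `|x|_h = (Σ|x_i|^h)^{1/h}`, `|x|_∞ = max |x_i|`. -/
noncomputable def pnorm (d : ℕ) (h : ℝ≥0∞) (x : Fin d → ℝ) : ℝ :=
  if h = ∞ then ⨆ i, |x i| else (∑ i, |x i| ^ h.toReal) ^ (1 / h.toReal)

/-- The partial derivative in the `i`-th coordinate. -/
noncomputable def partialDerivCoord (d : ℕ) (i : Fin d) (g : (Fin d → ℝ) → ℝ) :
    (Fin d → ℝ) → ℝ :=
  fun x => deriv (fun t => g (Function.update x i t)) (x i)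

/-- The multi-index partial derivative `∂_α = Π_i (∂/∂x_i)^{α_i}`. -/
noncomputable def partialDerivMulti (d : ℕ) (α : Fin d → ℕ) (g : (Fin d → ℝ) → ℝ) :
    (Fin d → ℝ) → ℝ :=
  (List.finRange d).foldr (fun i g' => (partialDerivCoord d i)^[α i] g') g

theorem pdc_eq {d : ℕ} (i : Fin d) {g : (Fin d → ℝ) → ℝ} (hg : Differentiable ℝ g) :
    partialDerivCoord d i g = fun x => fderiv ℝ g x (Pi.single i 1) := by
  funext x
  have h1 : HasDerivAt (fun t => Function.update x i t) (Pi.single i (1 : ℝ)) (x i) :=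
    hasDerivAt_update x i (x i)
  have h2 : HasFDerivAt g (fderiv ℝ g x) (Function.update x i (x i)) := by
    rw [Function.update_eq_self]; exact (hg x).hasFDerivAt
  exact (h2.comp_hasDerivAt (x i) h1).deriv

theorem pdc_contDiff {d n : ℕ} (i : Fin d) {g : (Fin d → ℝ) → ℝ}
    (hg : ContDiff ℝ ((n + 1 : ℕ) : WithTop ℕ∞) g) :
    ContDiff ℝ (n : WithTop ℕ∞) (partialDerivCoord d i g) := by
  rw [pdc_eq i (hg.differentiable (by exact_mod_cast Nat.succ_ne_zero n))]
  exact (hg.fderiv_right (m := (n : WithTop ℕ∞)) (by push_cast; exact le_rfl)).clm_apply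
    contDiff_const

theorem pdc_comm {d n : ℕ} (i j : Fin d) {g : (Fin d → ℝ) → ℝ}
    (hg : ContDiff ℝ ((n + 1 + 1 : ℕ) : WithTop ℕ∞) g) :
    partialDerivCoord d i (partialDerivCoord d j g) =
      partialDerivCoord d j (partialDerivCoord d i g) := by
  have hne : ∀ m : ℕ, ((m + 1 : ℕ) : WithTop ℕ∞) ≠ 0 := fun m => by
    exact_mod_cast Nat.succ_ne_zero m
  have hd := hg.differentiable (hne _)
  have h1 := fun k => (pdc_contDiff k hg).differentiable (hne _)
  have hf : Differentiable ℝ (fderiv ℝ g) :=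
    (hg.fderiv_right (m := ((n + 1 : ℕ) : WithTop ℕ∞)) (by push_cast; exact le_rfl)).differentiable
      (hne _)
  have key : ∀ k l : Fin d, ∀ x, partialDerivCoord d k (partialDerivCoord d l g) x =
      fderiv ℝ (fderiv ℝ g) x (Pi.single k 1) (Pi.single l 1) := by
    intro k l x
    rw [pdc_eq k (h1 l), pdc_eq l hd]
    have := ((hf x).hasFDerivAt.clm_apply (hasFDerivAt_const (Pi.single l (1:ℝ)) x)).fderiv
    simp only [this]
    simp
  funext x
  rw [key, key]
  have hs : IsSymmSndFDerivAt ℝ g x := by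
    apply hg.contDiffAt.isSymmSndFDerivAt
    simp only [minSmoothness_of_isRCLikeNormedField]
    exact_mod_cast (by omega : 2 ≤ n + 1 + 1)
  exact hs _ _

/-- Iterated partial derivatives along a list. -/
noncomputable def pdList (d : ℕ) : List (Fin d) → ((Fin d → ℝ) → ℝ) → ((Fin d → ℝ) → ℝ)
  | [], g => g
  | i :: l, g => pdList d l (partialDerivCoord d i g)

theorem pdList_append {d : ℕ} (l₁ l₂ : List (Fin d)) (g : (Fin d → ℝ) → ℝ) :
    pdList d (l₁ ++ l₂) g = pdList d l₂ (pdList d l₁ g) := by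
  induction l₁ generalizing g with
  | nil => rfl
  | cons i l ih => exact ih _

theorem pdList_replicate {d : ℕ} (n : ℕ) (i : Fin d) (g : (Fin d → ℝ) → ℝ) :
    pdList d (List.replicate n i) g = (partialDerivCoord d i)^[n] g := by
  induction n generalizing g with
  | zero => rfl
  | succ n ih => exact ih _

theorem pdList_perm {d : ℕ} {l₁ l₂ : List (Fin d)} (hp : l₁.Perm l₂) :
    ∀ g : (Fin d → ℝ) → ℝ, ContDiff ℝ (l₁.length : WithTop ℕ∞) g →
      pdList d l₁ g = pdList d l₂ g := by
  induction hp with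
  | nil => intro g _; rfl
  | cons i _ ih => intro g hg; exact ih _ (pdc_contDiff i hg)
  | swap i j l =>
    intro g hg
    simp only [pdList]
    rw [pdc_comm i j (n := l.length) hg]
  | trans h1 _ ih1 ih2 =>
    intro g hg
    rw [ih1 g hg, ih2 g (by rw [← h1.length_eq]; exact hg)]

theorem foldr_eq_pdList {d : ℕ} (α : Fin d → ℕ) (L : List (Fin d)) :
    ∃ l : List (Fin d), (∀ j, l.count j = L.count j * α j) ∧ ∀ g,
      L.foldr (fun i g' => (partialDerivCoord d i)^[α i] g') g = pdList d l g := by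
  induction L with
  | nil => exact ⟨[], by simp, fun g => rfl⟩
  | cons i L ih =>
    obtain ⟨l, hl, hg⟩ := ih
    refine ⟨l ++ List.replicate (α i) i, ?_, ?_⟩
    · intro j
      rw [List.count_append, hl, List.count_replicate, List.count_cons]
      by_cases hij : i = j
      · subst hij; simp; ring
      · simp [hij]
    · intro g
      rw [pdList_append, pdList_replicate, List.foldr_cons, hg]

theorem pdList_eq_multi {d : ℕ} (l : List (Fin d)) (g : (Fin d → ℝ) → ℝ)
    (hg : ContDiff ℝ (l.length : WithTop ℕ∞) g) :
    pdList d l g = partialDerivMulti d (fun i => l.count i) g := by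
  obtain ⟨l', hl', h⟩ := foldr_eq_pdList (fun i => l.count i) (List.finRange d)
  rw [partialDerivMulti, h]
  apply pdList_perm _ g hg
  rw [List.perm_iff_count]
  intro j
  rw [hl', List.count_eq_one_of_mem (List.nodup_finRange d) (List.mem_finRange j), one_mul]

/-- `(z · ∇)^j g`. -/
noncomputable def dirD (d : ℕ) : ℕ → ((Fin d → ℝ) → ℝ) → (Fin d → ℝ) → (Fin d → ℝ) → ℝ
  | 0, g, _, x => g x
  | j + 1, g, z, x => ∑ i, z i * dirD d j (partialDerivCoord d i g) z x

theorem dirD_bound {d : ℕ} (z x y : Fin d → ℝ) (B : ℝ) (j : ℕ) :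
    ∀ g : (Fin d → ℝ) → ℝ,
      (∀ l : List (Fin d), l.length = j → |pdList d l g x - pdList d l g y| ≤ B) →
      |dirD d j g z x - dirD d j g z y| ≤ (∑ i, |z i|) ^ j * B := by
  induction j with
  | zero => intro g hg; simpa [dirD, pdList] using hg [] rfl
  | succ j ih =>
    intro g hg
    simp only [dirD]
    rw [← Finset.sum_sub_distrib]
    refine (Finset.abs_sum_le_sum_abs _ _).trans ?_
    rw [pow_succ', mul_assoc, Finset.sum_mul]
    refine Finset.sum_le_sum fun i _ => ?_
    rw [← mul_sub, abs_mul]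
    refine mul_le_mul_of_nonneg_left ?_ (abs_nonneg _)
    exact ih _ fun l hl => hg (i :: l) (by simp [hl])

theorem dirD_hasDerivAt {d : ℕ} (z m : Fin d → ℝ) (j : ℕ) :
    ∀ g : (Fin d → ℝ) → ℝ, ContDiff ℝ ((j + 1 : ℕ) : WithTop ℕ∞) g → ∀ t : ℝ,
      HasDerivAt (fun t : ℝ => dirD d j g z (m + t • z)) (dirD d (j + 1) g z (m + t • z)) t := by
  induction j with
  | zero =>
    intro g hg t
    have hd : Differentiable ℝ g := hg.differentiable (by simp)
    have h1 : HasDerivAt (fun t : ℝ => m + t • z) z t := by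
      simpa using ((hasDerivAt_id t).smul_const z).const_add m
    have h2 := (hd (m + t • z)).hasFDerivAt.comp_hasDerivAt t h1
    have e : fderiv ℝ g (m + t • z) z = dirD d 1 g z (m + t • z) := by
      simp only [dirD]
      have hs : z = ∑ i, z i • (Pi.single i (1 : ℝ) : Fin d → ℝ) := pi_eq_sum_univ' z
      have := congrArg (fderiv ℝ g (m + t • z)) hs
      rw [this, map_sum]
      refine Finset.sum_congr rfl fun i _ => ?_
      rw [pdc_eq i hd, map_smul, smul_eq_mul]
    rw [e] at h2
    exact h2
  | succ j ih =>
    intro g hg t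
    have := HasDerivAt.fun_sum (u := Finset.univ) fun i (_ : i ∈ Finset.univ) =>
      (ih _ (pdc_contDiff i hg) t).const_mul (z i)
    exact this

theorem dirD_poly {d : ℕ} (m : Fin d → ℝ) (j : ℕ) :
    ∀ g : (Fin d → ℝ) → ℝ, ∃ P : MvPolynomial (Fin d) ℝ, P.totalDegree ≤ j ∧
      ∀ x, MvPolynomial.eval x P = dirD d j g (x - m) m := by
  induction j with
  | zero => intro g; exact ⟨MvPolynomial.C (g m), by simp, by simp [dirD]⟩
  | succ j ih =>
    intro g
    choose P hP hP' using fun i => ih (partialDerivCoord d i g)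
    refine ⟨∑ i, (MvPolynomial.X i - MvPolynomial.C (m i)) * P i, ?_, ?_⟩
    · refine MvPolynomial.totalDegree_finsetSum_le fun i _ => ?_
      refine (MvPolynomial.totalDegree_mul _ _).trans ?_
      have : (MvPolynomial.X i - MvPolynomial.C (m i) : MvPolynomial (Fin d) ℝ).totalDegree ≤ 1 :=
        (MvPolynomial.totalDegree_sub _ _).trans (by simp)
      have := hP i
      omega
    · intro x
      simp [dirD, hP']

theorem taylor_poly {d : ℕ} (m : Fin d → ℝ) (p : ℕ) (g : (Fin d → ℝ) → ℝ) :
    ∃ P : MvPolynomial (Fin d) ℝ, P.totalDegree ≤ p ∧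
      ∀ x, MvPolynomial.eval x P =
        ∑ j ∈ Finset.range (p + 1), dirD d j g (x - m) m / (j.factorial : ℝ) := by
  choose P hP hP' using fun j => dirD_poly m j g
  refine ⟨∑ j ∈ Finset.range (p + 1), P j * MvPolynomial.C ((j.factorial : ℝ)⁻¹), ?_, ?_⟩
  · refine MvPolynomial.totalDegree_finsetSum_le fun j hj => ?_
    refine (MvPolynomial.totalDegree_mul _ _).trans ?_
    have := hP j
    have := Finset.mem_range.1 hj
    rw [MvPolynomial.totalDegree_C]
    omega
  · intro x
    simp [hP', div_eq_mul_inv]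

theorem taylor_one {K : ℝ} (p : ℕ) : ∀ F : ℕ → ℝ → ℝ,
    (∀ j < p, ∀ t, HasDerivAt (F j) (F (j + 1) t) t) →
    (∀ t ∈ Set.Icc (0 : ℝ) 1, |F p t - F p 0| ≤ K * t) →
    ∀ t ∈ Set.Icc (0 : ℝ) 1,
      |F 0 t - ∑ j ∈ Finset.range (p + 1), F j 0 * (t ^ j / (j.factorial : ℝ))| ≤
        K * (t ^ (p + 1) / ((p + 1).factorial : ℝ)) := by
  have hpow : ∀ (n : ℕ) (t : ℝ), HasDerivAt (fun t : ℝ => t ^ (n + 1) / ((n + 1).factorial : ℝ))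
      (t ^ n / (n.factorial : ℝ)) t := by
    intro n t
    have := (hasDerivAt_pow (n + 1) t).div_const ((n + 1).factorial : ℝ)
    refine this.congr_deriv ?_
    rw [Nat.factorial_succ]
    have : (n.factorial : ℝ) ≠ 0 := by positivity
    push_cast
    field_simp
  induction p with
  | zero => intro F _ hK t ht; simpa using hK t ht
  | succ p ih =>
    intro F hF hK
    have IH := ih (fun j => F (j + 1)) (fun j hj => hF (j + 1) (by omega)) hK
    have hD : ∀ t, HasDerivAt
        (fun t => F 0 t - ∑ j ∈ Finset.range (p + 1 + 1), F j 0 * (t ^ j / (j.factorial : ℝ)))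
        (F 1 t - ∑ j ∈ Finset.range (p + 1), F (j + 1) 0 * (t ^ j / (j.factorial : ℝ))) t := by
      intro t
      simp only [Finset.sum_range_succ' _ (p + 1)]
      refine (hF 0 (by omega) t).sub ?_
      have h1 := HasDerivAt.fun_sum (u := Finset.range (p + 1)) fun j (_ : j ∈ Finset.range (p + 1)) =>
        (hpow j t).const_mul (F (j + 1) 0)
      simpa using h1.add_const (F 0 0 * (1 / 1))
    have hB : ∀ t, HasDerivAt (fun t : ℝ => K * (t ^ (p + 1 + 1) / ((p + 1 + 1).factorial : ℝ)))
        (K * (t ^ (p + 1) / ((p + 1).factorial : ℝ))) t :=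
      fun t => (hpow (p + 1) t).const_mul K
    intro t ht
    have := image_norm_le_of_norm_deriv_right_le_deriv_boundary (a := (0 : ℝ)) (b := 1)
      (fun t _ => (hD t).continuousAt.continuousWithinAt)
      (fun t _ => (hD t).hasDerivWithinAt) (by simp [Finset.sum_range_succ']) hB
      (fun t ht => IH t ⟨ht.1, ht.2.le⟩) ht
    exact this

theorem pnorm_le {d : ℕ} (hd : 0 < d) (h : ℝ≥0∞) (hh : 1 ≤ h) (x : Fin d → ℝ) (r : ℝ)
    (hr : 0 ≤ r) (hx : ∀ i, |x i| ≤ r) :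
    pnorm d h x ≤ (d : ℝ) ^ (h⁻¹).toReal * r := by
  have : Nonempty (Fin d) := ⟨⟨0, hd⟩⟩
  unfold pnorm
  split_ifs with hi
  · subst hi
    simpa using ciSup_le hx
  · have hpos : 0 < h.toReal := ENNReal.toReal_pos (by rintro rfl; simp at hh) hi
    have hs : ∑ i, |x i| ^ h.toReal ≤ d * r ^ h.toReal := by
      refine (Finset.sum_le_card_nsmul Finset.univ _ (r ^ h.toReal) fun i _ =>
        Real.rpow_le_rpow (abs_nonneg _) (hx i) hpos.le).trans ?_
      simp
    refine (Real.rpow_le_rpow (Finset.sum_nonneg fun i _ => by positivity) hs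
      (by positivity)).trans ?_
    rw [Real.mul_rpow (by positivity) (by positivity), ← Real.rpow_mul hr,
      mul_one_div_cancel hpos.ne', Real.rpow_one, ENNReal.toReal_inv, one_div]

/-- Lemma 7.1: a `(p+1,C)`-smooth (w.r.t. `|·|_h`) function `a` on `[0,1]^d` is uniformly
approximated, on each cube of the equidistant partition of `[0,1]^d` into `Q^d` cubes, by a
polynomial of total degree `≤ p` with error at most `(C/(d^{1-1/h}(p+1)!)) (d/(2Q))^{p+1}`. -/
theorem piecewise_polynomial_approximation
    (d : ℕ) (hd : 0 < d) (p : ℕ) (C : ℝ) (hC : 0 < C) (h : ℝ≥0∞) (hh : 1 ≤ h)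
    (Q : ℕ) (hQ : 0 < Q) (a : (Fin d → ℝ) → ℝ)
    (hsmooth : ContDiff ℝ (p : ℕ∞) a)
    (hlip : ∀ α : Fin d → ℕ, (∑ i, α i) = p →
      ∀ x y : Fin d → ℝ, (∀ i, x i ∈ Set.Icc (0 : ℝ) 1) → (∀ i, y i ∈ Set.Icc (0 : ℝ) 1) →
        |partialDerivMulti d α a x - partialDerivMulti d α a y| ≤ C * pnorm d h (x - y)) :
    ∃ P : (Fin d → Fin Q) → MvPolynomial (Fin d) ℝ,
      (∀ k, (P k).totalDegree ≤ p) ∧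
      ∀ x : Fin d → ℝ, (∀ i, x i ∈ Set.Icc (0 : ℝ) 1) →
        ∀ k : Fin d → Fin Q,
          (∀ i, (k i : ℝ) / Q ≤ x i ∧ x i ≤ ((k i : ℝ) + 1) / Q) →
            |a x - MvPolynomial.eval x (P k)| ≤
              C / ((d : ℝ) ^ (1 - (h⁻¹).toReal) * (Nat.factorial (p + 1))) *
                ((d : ℝ) / (2 * Q)) ^ (p + 1) := by
  choose P hP hP' using fun k : Fin d → Fin Q =>
    taylor_poly (fun i => ((k i : ℝ) + 1 / 2) / Q) p a
  refine ⟨P, hP, ?_⟩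
  intro x hx k hk
  rw [hP']
  set m : Fin d → ℝ := fun i => ((k i : ℝ) + 1 / 2) / Q with hm
  set z := x - m with hz
  have hQ' : (0 : ℝ) < Q := by exact_mod_cast hQ
  have hd' : (0 : ℝ) < d := by exact_mod_cast hd
  set r : ℝ := 1 / (2 * Q) with hr
  have hr0 : 0 ≤ r := by positivity
  have hzr : ∀ i, |z i| ≤ r := by
    intro i
    obtain ⟨h1, h2⟩ := hk i
    have e1 : m i = (k i : ℝ) / Q + r := by simp only [hm, hr]; field_simp
    have e2 : ((k i : ℝ) + 1) / Q = (k i : ℝ) / Q + 2 * r := by simp only [hr]; field_simp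
    rw [hz, Pi.sub_apply, abs_le]
    constructor <;> linarith
  have hm01 : ∀ i, m i ∈ Set.Icc (0 : ℝ) 1 := by
    intro i
    have : ((k i : ℕ) : ℝ) + 1 ≤ Q := by exact_mod_cast (k i).2
    refine ⟨by simp only [hm]; positivity, ?_⟩
    simp only [hm]
    rw [div_le_one hQ']
    linarith
  have hline : ∀ t ∈ Set.Icc (0 : ℝ) 1, ∀ i, (m + t • z) i ∈ Set.Icc (0 : ℝ) 1 := by
    intro t ht i
    have := (convex_Icc (0 : ℝ) 1).add_smul_sub_mem (hm01 i) (hx i) ht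
    simpa [hz] using this
  have hsm : ContDiff ℝ (p : WithTop ℕ∞) a := by exact_mod_cast hsmooth
  have hsum : ∑ i, |z i| ≤ d * r := by
    refine (Finset.sum_le_card_nsmul Finset.univ _ r fun i _ => hzr i).trans ?_
    simp
  have hT := taylor_one (K := (d * r) ^ p * (C * ((d : ℝ) ^ (h⁻¹).toReal * r))) p
    (fun j t => dirD d j a z (m + t • z)) ?_ ?_ 1 ⟨zero_le_one, le_rfl⟩
  · have e : m + z = x := by simp [hz]
    simp only [one_smul, zero_smul, add_zero, one_pow, mul_one_div, e] at hT
    refine hT.trans (le_of_eq ?_)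
    have er : (d : ℝ) / (2 * Q) = d * r := by rw [hr, mul_one_div]
    rw [er, Real.rpow_sub hd', Real.rpow_one, pow_succ]
    clear_value r
    have : (0 : ℝ) < (d : ℝ) ^ (h⁻¹).toReal := by positivity
    have : ((p + 1).factorial : ℝ) ≠ 0 := by positivity
    field_simp
  · intro j hj t
    exact dirD_hasDerivAt z m j a (hsm.of_le (by exact_mod_cast hj)) t
  · intro t ht
    simp only [zero_smul, add_zero]
    refine (dirD_bound z (m + t • z) m (C * ((d : ℝ) ^ (h⁻¹).toReal * (t * r))) p a ?_).trans ?_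
    · intro l hl
      rw [pdList_eq_multi l a (by rw [hl]; exact hsm)]
      refine (hlip _ ?_ _ _ (hline t ht) hm01).trans ?_
      · rw [← hl]
        have := Multiset.sum_count_eq_card (s := Finset.univ) (m := (l : Multiset (Fin d)))
          (fun _ _ => Finset.mem_univ _)
        simpa using this
      · refine mul_le_mul_of_nonneg_left ?_ hC.le
        refine pnorm_le hd h hh _ _ (mul_nonneg ht.1 hr0) fun i => ?_
        simp only [add_sub_cancel_left, Pi.smul_apply, smul_eq_mul, abs_mul, abs_of_nonneg ht.1]
        exact mul_le_mul_of_nonneg_left (hzr i) ht.1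
    · have h0 : 0 ≤ C * ((d : ℝ) ^ (h⁻¹).toReal * (t * r)) :=
        mul_nonneg hC.le (mul_nonneg (by positivity) (mul_nonneg ht.1 hr0))
      refine (mul_le_mul_of_nonneg_right (pow_le_pow_left₀
        (Finset.sum_nonneg fun i _ => abs_nonneg _) hsum p) h0).trans (le_of_eq ?_)
      ring
end

section
/- Let d ∈ ℕ and p ∈ ℕ₀ satisfy 2(p+1) ≤ d (i.e. p ≤ (d−2)/2). Let ε ∈ (0,1] and let real numbers J, Q, R, N₀ ≥ 1 satisfy J ≥ ε^{−1/2}, R ≥ 1 and (J/N₀)(R/Q)^{2(p+1)} ≤ ε². Then J Q^d N₀ ≥ ε^{−3}. (Consequently, in this parameter regime the cost of the RCV algorithm is at least of order ε^{−3}, worse than the ε^{−2.5} complexity of the standard Monte Carlo algorithm with a second-order scheme.) -/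
/-- Lower complexity bound for the RCV algorithm when `p ≤ (d-2)/2`: if `2(p+1) ≤ d`,
`J ≥ ε^{-1/2}`, `J, Q, R, N₀ ≥ 1` and `(J/N₀)(R/Q)^{2(p+1)} ≤ ε²`, then
`J Q^d N₀ ≥ ε^{-3}`. -/
theorem rcv_cost_lower_bound_small_p
    (d p : ℕ) (hd : 0 < d) (hpd : 2 * (p + 1) ≤ d)
    (ε : ℝ) (hε0 : 0 < ε) (hε1 : ε ≤ 1)
    (J Q R N₀ : ℝ) (hJ1 : 1 ≤ J) (hQ1 : 1 ≤ Q) (hR1 : 1 ≤ R) (hN₀1 : 1 ≤ N₀)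
    (hJ : ε ^ (-(1 / 2) : ℝ) ≤ J)
    (hconstr : J / N₀ * (R / Q) ^ (2 * (p + 1)) ≤ ε ^ 2) :
    ε ^ (-(3 : ℝ)) ≤ J * Q ^ d * N₀ := by
  have hJ2 : ε⁻¹ ≤ J ^ 2 := by
    have h1 : (ε ^ (-(1 / 2) : ℝ)) ^ 2 = ε⁻¹ := by
      rw [← Real.rpow_natCast, ← Real.rpow_mul hε0.le, ← Real.rpow_neg_one]
      norm_num
    rw [← h1]
    exact pow_le_pow_left₀ (Real.rpow_nonneg hε0.le _) hJ 2
  have hN : 0 < N₀ := by linarith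
  have hQ : 0 < Q := by linarith
  have hJ0 : 0 < J := by linarith
  have hRk : 1 ≤ R ^ (2 * (p + 1)) := one_le_pow₀ hR1
  have hQk : Q ^ (2 * (p + 1)) ≤ Q ^ d := pow_le_pow_right₀ hQ1 hpd
  have hQp : 0 < Q ^ (2 * (p + 1)) := by positivity
  have h2 : J * R ^ (2 * (p + 1)) ≤ ε ^ 2 * (N₀ * Q ^ (2 * (p + 1))) := by
    rw [div_pow, div_mul_div_comm, div_le_iff₀ (by positivity)] at hconstr
    exact hconstr
  have h3 : J ≤ ε ^ 2 * (N₀ * Q ^ d) := by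
    calc J ≤ J * R ^ (2 * (p + 1)) := le_mul_of_one_le_right hJ0.le hRk
      _ ≤ _ := h2
      _ ≤ _ := by gcongr
  have h4 : 1 ≤ ε * J ^ 2 := by
    have := mul_le_mul_of_nonneg_left hJ2 hε0.le
    rwa [mul_inv_cancel₀ hε0.ne'] at this
  have h5 : ε ^ (-(3 : ℝ)) = 1 / ε ^ 3 := by
    rw [Real.rpow_neg hε0.le, one_div]
    norm_cast
  rw [h5, div_le_iff₀ (by positivity)]
  calc 1 ≤ ε * J ^ 2 := h4
    _ = ε * J * J := by ring
    _ ≤ ε * J * (ε ^ 2 * (N₀ * Q ^ d)) := by gcongr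
    _ = _ := by ring
end

section
/- Let d ∈ ℕ, p ∈ ℕ₀ with 2(p+1) > d, and let ν satisfy 0 < ν ≤ 2d(p+1)/(2(p+1) − d). Let ε ∈ (0,1] and let real numbers J, Q, R, N₀ ≥ 1 satisfy J ≥ ε^{−1/2}, (J/N₀)(R/Q)^{2(p+1)} ≤ ε², and 1/(R^ν N₀) ≤ ε². Then J Q^d N₀ ≥ ε^{−5/2}. (Consequently, in this parameter regime the cost of the RCV algorithm cannot beat the ε^{−2.5} complexity of the standard Monte Carlo algorithm with a second-order scheme.) -/
/-- Lower complexity bound for the RCV algorithm when `p > (d-2)/2` but the tail exponent is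
small, `0 < ν ≤ 2d(p+1)/(2(p+1)-d)`: if `J ≥ ε^{-1/2}`, `J, Q, R, N₀ ≥ 1`,
`(J/N₀)(R/Q)^{2(p+1)} ≤ ε²` and `1/(R^ν N₀) ≤ ε²`, then `J Q^d N₀ ≥ ε^{-5/2}`. -/
theorem rcv_cost_lower_bound_small_nu
    (d p : ℕ) (hd : 0 < d) (hpd : (d : ℝ) < 2 * (p + 1))
    (ν : ℝ) (hν0 : 0 < ν)
    (hν : ν ≤ 2 * d * (p + 1) / (2 * ((p : ℝ) + 1) - d))
    (ε : ℝ) (hε0 : 0 < ε) (hε1 : ε ≤ 1)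
    (J Q R N₀ : ℝ) (hJ1 : 1 ≤ J) (hQ1 : 1 ≤ Q) (hR1 : 1 ≤ R) (hN₀1 : 1 ≤ N₀)
    (hJ : ε ^ (-(1 / 2) : ℝ) ≤ J)
    (hconstr1 : J / N₀ * (R / Q) ^ (2 * (p + 1)) ≤ ε ^ 2)
    (hconstr2 : 1 / (R ^ ν * N₀) ≤ ε ^ 2) :
    ε ^ (-(5 / 2) : ℝ) ≤ J * Q ^ d * N₀ := by
  have hJ0 : 0 < J := by linarith
  have hQ0 : 0 < Q := by linarith
  have hR0 : 0 < R := by linarith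
  have hN0 : 0 < N₀ := by linarith
  have hRν : 0 < R ^ ν := Real.rpow_pos_of_pos hR0 ν
  have hkd : 0 < 2 * ((p : ℝ) + 1) - d := by linarith
  have hd0 : (0 : ℝ) < d := by exact_mod_cast hd
  have hj := Real.log_nonneg hJ1
  have hr := Real.log_nonneg hR1
  have h1 := Real.log_le_log (Real.rpow_pos_of_pos hε0 _) hJ
  rw [Real.log_rpow hε0] at h1
  have h2 := Real.log_le_log (by positivity) hconstr1
  rw [Real.log_mul (by positivity) (by positivity), Real.log_div hJ0.ne' hN0.ne', Real.log_pow,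
    Real.log_div hR0.ne' hQ0.ne', Real.log_pow] at h2
  have h3 := Real.log_le_log (by positivity) hconstr2
  rw [one_div, Real.log_inv, Real.log_mul hRν.ne' hN0.ne', Real.log_rpow hR0, Real.log_pow] at h3
  rw [le_div_iff₀ hkd, show (2 : ℝ) * d * (p + 1) = d * (2 * ((p : ℝ) + 1)) by ring] at hν
  push_cast at h2 h3
  rw [← Real.log_le_log_iff (Real.rpow_pos_of_pos hε0 _) (by positivity), Real.log_rpow hε0,
    Real.log_mul (by positivity) hN0.ne', Real.log_mul hJ0.ne' (by positivity), Real.log_pow]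
  generalize Real.log J = j at *
  generalize Real.log Q = q at *
  generalize Real.log R = r at *
  generalize Real.log N₀ = n at *
  generalize Real.log ε = e at *
  have hk0 : 0 < 2 * ((p : ℝ) + 1) := by positivity
  generalize 2 * ((p : ℝ) + 1) = k at *
  have hν' : ν * (k - d) ≤ d * k := hν
  have a1 : (k - d) * (-2 * e - n) ≤ (k - d) * (ν * r) :=
    mul_le_mul_of_nonneg_left (by linarith) hkd.le
  have a2 := mul_le_mul_of_nonneg_right hν' hr
  have a3 := mul_le_mul_of_nonneg_left h2 hd0.le
  have a4 := mul_nonneg hd0.le hj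
  have a5 : k * (-2 * e - n) ≤ k * (d * q) := by nlinarith
  have a6 := le_of_mul_le_mul_left a5 hk0
  linarith
end
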